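/- arXiv:1905.13207 — 2 statements merged into one kernel-verified Lean document; each statement's English description precedes it below -/
import Mathlib

section
/- Let d ∈ (0, 2) and let A ⊂ ℂ be a compact set whose d-occupation measure m_A exists. Let U ⊆ ℂ be an open set containing A and let φ : U → ℂ be a conformal map, i.e. injective and holomorphic on U. Then the d-occupation measure m_{φ(A)} of the compact set φ(A) exists, and m_{φ(A)} equals the measure that is absolutely continuous with respect to the pushforward measure φ_* m_A with density w ↦ |φ'(φ^{−1}(w))|^d; in the paper's notation, m_{φ(A)} = |(φ^{−1})'|^{−d} · (φ_* m_A). -/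
open MeasureTheory

/-- `r^(d-2)` times Lebesgue measure on `ℂ ≅ ℝ²` restricted to the closed `r`-neighborhood
`A_r = {z : |z - x| ≤ r for some x ∈ A}` of `A`. -/
noncomputable def occApprox (A : Set ℂ) (d r : ℝ) : Measure ℂ :=
  ENNReal.ofReal (r ^ (d - 2)) • (volume.restrict (Metric.cthickening r A))

/-- `m` is the `d`-occupation measure of `A ⊆ ℂ`: `m` has finite and strictly positive total
mass, and the measures `r^(d-2) · Leb|_{A_r}` converge weakly to `m` as `r → 0⁺`, i.e. the
integrals of every bounded continuous function converge. -/
def IsOccupationMeasure (A : Set ℂ) (d : ℝ) (m : Measure ℂ) : Prop :=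
  m Set.univ ≠ 0 ∧ m Set.univ ≠ ⊤ ∧
  ∀ f : BoundedContinuousFunction ℂ ℝ,
    Filter.Tendsto (fun r : ℝ => ∫ z, f z ∂(occApprox A d r))
      (nhdsWithin 0 (Set.Ioi 0)) (nhds (∫ z, f z ∂m))

/-!
Near a point `a` of `A`, a conformal map scales distances by `c a = |φ' a|`, up to factors that
tend to `1`, and so does its inverse by `1 / c a`. Hence `φ⁻¹` of the `r`-neighborhood of `φ(A)`
lies, near `a`, between the neighborhoods of `A` of radii `r * T₁` and `r * T₂` for any
`T₁ < 1 / c a < T₂`. Rescaling the radius in the definition of `m_A` multiplies the limit by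
`T ^ (n - d)`, so a partition of unity subordinate to a fine cover of `A` shows that these preimages
have limit `c ^ (d - n) · m_A`. The Jacobian of `φ` contributes `c ^ n`, for a total of `c ^ d`.
-/

section ThickeningLimit

open Filter Metric Set Topology
open scoped BoundedContinuousFunction

/-- The occupation measure of codimension `s` of a subset `A` of a metric measure space `(X, μ)`:
the nonzero finite weak limit of `r ^ (-s)` times `μ` restricted to the closed `r`-neighborhood
of `A`. The `d`-occupation measure in `ℝⁿ` is the case `s = n - d`. -/
structure IsCodimOccupationMeasure {X : Type*} [MetricSpace X] [MeasurableSpace X]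
    (μ : Measure X) (s : ℝ) (A : Set X) (m : Measure X) : Prop where
  univ_ne_zero : m univ ≠ 0
  univ_ne_top : m univ ≠ ⊤
  tendsto_integral (f : X →ᵇ ℝ) :
    Tendsto (fun r : ℝ => r ^ (-s) * ∫ z in cthickening r A, f z ∂μ) (𝓝[>] 0) (𝓝 (∫ z, f z ∂m))

/-- The sets `S r` are, to first order as `r → 0`, the neighborhoods of `A` with variable radius
`r * ρ`: near each point `a` of `A`, they lie between the neighborhoods of radius `r * T` for
`T < ρ a` and those for `T > ρ a`. -/
structure IsAsymptoticThickening {X : Type*} [MetricSpace X] [MeasurableSpace X]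
    (S : ℝ → Set X) (A : Set X) (ρ : X → ℝ) : Prop where
  measurableSet (r : ℝ) : MeasurableSet (S r)
  eventually_subset : ∀ V ∈ 𝓝ˢ A, ∀ᶠ r in 𝓝[>] 0, S r ⊆ V
  pos : ∀ a ∈ A, 0 < ρ a
  continuousOn : ContinuousOn ρ A
  mem_of_infDist_le : ∀ a ∈ A, ∀ T, 0 < T → T < ρ a →
    ∀ᶠ z in 𝓝 a, ∀ r > 0, infDist z A ≤ r * T → z ∈ S r
  infDist_le_of_mem : ∀ a ∈ A, ∀ T, ρ a < T →
    ∀ᶠ z in 𝓝 a, ∀ r > 0, z ∈ S r → infDist z A ≤ r * T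

theorem mem_cthickening_iff_infDist_le {Y : Type*} [PseudoMetricSpace Y] {B : Set Y}
    (hB : B.Nonempty) {r : ℝ} (hr : 0 ≤ r) {z : Y} : z ∈ cthickening r B ↔ infDist z B ≤ r := by
  rw [mem_cthickening_iff, infDist, ENNReal.le_ofReal_iff_toReal_le (infEDist_ne_top hB) hr]

theorem exists_boundedContinuousFunction_eq_of_hasCompactSupport {Y : Type*} [TopologicalSpace Y]
    {f : Y → ℝ} (hf : Continuous f) (hfc : HasCompactSupport f) : ∃ g : Y →ᵇ ℝ, ⇑g = f :=
  let ⟨C, hC⟩ := hfc.exists_bound_of_continuous hf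
  ⟨.ofNormedAddCommGroup f hf C hC, rfl⟩

theorem setIntegral_le_setIntegral_of_forall_ne_zero {Y : Type*} [MeasurableSpace Y]
    {ν : Measure Y} {f : Y → ℝ} {s t : Set Y} (hf : 0 ≤ f) (hs : MeasurableSet s)
    (hft : IntegrableOn f t ν) (hst : ∀ z ∈ s, f z ≠ 0 → z ∈ t) :
    ∫ z in s, f z ∂ν ≤ ∫ z in t, f z ∂ν :=
  calc ∫ z in s, f z ∂ν = ∫ z in s ∩ t, f z ∂ν :=
        setIntegral_eq_of_subset_of_forall_sdiff_eq_zero hs inter_subset_left fun z hz =>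
          not_imp_comm.1 (hst z hz.1) fun hzt => hz.2 ⟨hz.1, hzt⟩
    _ ≤ ∫ z in t, f z ∂ν :=
        setIntegral_mono_set hft (.of_forall hf) inter_subset_right.eventuallyLE

theorem integrableOn_cthickening {X : Type*} [PseudoMetricSpace X] [ProperSpace X]
    [MeasurableSpace X] [BorelSpace X] {μ : Measure X} [IsFiniteMeasureOnCompacts μ] {A : Set X}
    (hA : IsCompact A) {f : X → ℝ} (hf : Continuous f) (r : ℝ) :
    IntegrableOn f (cthickening r A) μ :=
  hf.locallyIntegrable.integrableOn_isCompact hA.cthickening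

theorem exists_partitionOfUnity_of_forall_mem_nhds {Y : Type*} [TopologicalSpace Y] [T2Space Y]
    [LocallyCompactSpace Y] {A : Set Y} (hA : IsCompact A) {P : Y → Set Y}
    (hP : ∀ a ∈ A, P a ∈ 𝓝 a) :
    ∃ (n : ℕ) (a : Fin n → Y) (f : Fin n → C(Y, ℝ)), (∀ i, a i ∈ A) ∧
      (∀ i, tsupport (f i) ⊆ P (a i)) ∧ (∀ i, HasCompactSupport (f i)) ∧ (∀ i, 0 ≤ f i) ∧
      ∀ᶠ z in 𝓝ˢ A, ∑ i, f i z = 1 := by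
  obtain ⟨t, htA, hAt⟩ := hA.elim_nhds_subcover (fun a => interior (P a)) fun a ha =>
    interior_mem_nhds.2 (hP a ha)
  obtain ⟨K, hK, hAK, hKt⟩ := exists_compact_between hA
    (isOpen_biUnion fun a (_ : a ∈ t) => isOpen_interior (s := P a)) hAt
  let a (i : Fin t.card) : Y := t.equivFin.symm i
  have hKa : K ⊆ ⋃ i, interior (P (a i)) := fun z hz => by
    obtain ⟨b, hb, hzb⟩ := mem_iUnion₂.1 (hKt hz)
    exact mem_iUnion.2 ⟨t.equivFin ⟨b, hb⟩, by simpa [a] using hzb⟩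
  obtain ⟨f, hfP, hfK, hf01, hfc⟩ :=
    exists_continuous_sum_one_of_isOpen_isCompact (fun _ => isOpen_interior) hK hKa
  refine ⟨t.card, a, f, fun i => htA _ (t.equivFin.symm i).2,
    fun i => (hfP i).trans interior_subset, hfc, fun i z => (hf01 i z).1, ?_⟩
  filter_upwards [mem_nhdsSet_iff_forall.2 fun z hz => mem_interior_iff_mem_nhds.1 (hAK hz)]
    with z hz
  simpa using hfK hz

theorem exists_sum_eq_of_forall_mem_nhds {Y : Type*} [TopologicalSpace Y] [T2Space Y]
    [LocallyCompactSpace Y] {A U : Set Y} (hA : IsCompact A) (hU : IsOpen U) (hAU : A ⊆ U)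
    {F : Y → ℝ} (hF : ContinuousOn F U) (hF₀ : ∀ z ∈ U, 0 ≤ F z) {P : Y → Set Y}
    (hP : ∀ a ∈ A, P a ∈ 𝓝 a) :
    ∃ (n : ℕ) (a : Fin n → Y) (G : Fin n → Y → ℝ), (∀ i, a i ∈ A) ∧
      (∀ i z, G i z ≠ 0 → z ∈ P (a i)) ∧ (∀ i, Continuous (G i)) ∧
      (∀ i, HasCompactSupport (G i)) ∧ (∀ i, 0 ≤ G i) ∧ ∀ᶠ z in 𝓝ˢ A, ∑ i, G i z = F z := by
  obtain ⟨n, a, f, haA, hfP, hfc, hf₀, hsum⟩ := exists_partitionOfUnity_of_forall_mem_nhds hA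
    fun a ha => inter_mem (hP a ha) (hU.mem_nhds (hAU ha))
  have hf (i : Fin n) (z : Y) (hz : f i z ≠ 0) : z ∈ P (a i) ∩ U := hfP i (subset_tsupport _ hz)
  refine ⟨n, a, fun i z => f i z * F z, haA, fun i z hz => (hf i z (left_ne_zero_of_mul hz)).1,
    fun i => continuous_of_tsupport fun z hz => ?_, fun i => (hfc i).mul_right, fun i z => ?_, ?_⟩
  · exact (f i).continuousAt z |>.mul
      (hF.continuousAt (hU.mem_nhds (hfP i (tsupport_mul_subset_left hz)).2))
  · by_cases hz : f i z = 0
    · simp [hz]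
    · exact mul_nonneg (hf₀ i z) (hF₀ z (hf i z hz).2)
  · filter_upwards [hsum] with z hz
    rw [← Finset.sum_mul, hz, one_mul]

namespace IsCodimOccupationMeasure

variable {X : Type*} [MetricSpace X] [MeasurableSpace X] {μ m : Measure X} {s : ℝ} {A : Set X}

theorem nonempty (hm : IsCodimOccupationMeasure μ s A m) : A.Nonempty := by
  rw [nonempty_iff_ne_empty]
  rintro rfl
  have hlim := hm.tendsto_integral (.const X 1)
  have hzero : m.real univ = 0 := by
    simpa [tendsto_const_nhds_iff, eq_comm] using hlim
  exact ENNReal.toReal_ne_zero.2 ⟨hm.univ_ne_zero, hm.univ_ne_top⟩ hzero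

theorem isFiniteMeasure (hm : IsCodimOccupationMeasure μ s A m) : IsFiniteMeasure m :=
  ⟨hm.univ_ne_top.lt_top⟩

theorem tendsto_integral_mul_radius (hm : IsCodimOccupationMeasure μ s A m) {T : ℝ} (hT : 0 < T)
    (f : X →ᵇ ℝ) :
    Tendsto (fun r : ℝ => r ^ (-s) * ∫ z in cthickening (r * T) A, f z ∂μ) (𝓝[>] 0)
      (𝓝 (T ^ s * ∫ z, f z ∂m)) := by
  have hmul : Tendsto (fun r : ℝ => r * T) (𝓝[>] 0) (𝓝[>] 0) :=
    tendsto_nhdsWithin_of_tendsto_nhds_of_eventually_within _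
      ((tendsto_id.mul_const T).mono_left nhdsWithin_le_nhds |>.trans (by simp))
      (eventually_mem_nhdsWithin.mono fun r hr => mul_pos hr hT)
  refine (((hm.tendsto_integral f).comp hmul).const_mul (T ^ s)).congr' ?_
  filter_upwards [self_mem_nhdsWithin] with r hr
  calc T ^ s * ((r * T) ^ (-s) * ∫ z in cthickening (r * T) A, f z ∂μ)
      = T ^ s * T ^ (-s) * (r ^ (-s) * ∫ z in cthickening (r * T) A, f z ∂μ) := by
        rw [Real.mul_rpow (le_of_lt hr) hT.le]; ring
    _ = _ := by rw [← Real.rpow_add hT, add_neg_cancel, Real.rpow_zero, one_mul]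

variable [ProperSpace X] [BorelSpace X] [IsFiniteMeasureOnCompacts μ]

theorem of_nonneg (hA : IsCompact A) (h₀ : m univ ≠ 0) (hfin : m univ ≠ ⊤)
    (h : ∀ f : X →ᵇ ℝ, 0 ≤ f →
      Tendsto (fun r : ℝ => r ^ (-s) * ∫ z in cthickening r A, f z ∂μ) (𝓝[>] 0)
        (𝓝 (∫ z, f z ∂m))) :
    IsCodimOccupationMeasure μ s A m := by
  refine ⟨h₀, hfin, fun f => ?_⟩
  have : IsFiniteMeasure m := ⟨hfin.lt_top⟩
  let C : X →ᵇ ℝ := .const X ‖f‖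
  have hlim := (h (f + C) f.add_norm_nonneg).sub (h C fun _ => norm_nonneg f)
  simp only [BoundedContinuousFunction.add_apply, integral_add (f.integrable m) (C.integrable m),
    integral_add (integrableOn_cthickening hA f.continuous _)
      (integrableOn_cthickening hA C.continuous _), mul_add, add_sub_cancel_right] at hlim
  exact hlim

theorem ae_mem (hm : IsCodimOccupationMeasure μ s A m) (hA : IsCompact A) :
    ∀ᵐ z ∂m, z ∈ A := by
  have := hm.isFiniteMeasure
  let f : X →ᵇ ℝ := .ofNormedAddCommGroup (fun z => min (infDist z A) 1)
    ((continuous_infDist_pt A).min continuous_const) 1 fun z => by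
      rw [Real.norm_of_nonneg (le_min infDist_nonneg zero_le_one)]; exact min_le_right _ _
  have hf : 0 ≤ f := fun z => le_min infDist_nonneg zero_le_one
  have hlim : Tendsto (fun r : ℝ => r * (r ^ (-s) * ∫ _ in cthickening r A, (1 : ℝ) ∂μ))
      (𝓝[>] 0) (𝓝 0) := by
    simpa using (tendsto_id.mono_left nhdsWithin_le_nhds).mul (hm.tendsto_integral (.const X 1))
  have hle : ∀ᶠ r : ℝ in 𝓝[>] 0, r ^ (-s) * ∫ z in cthickening r A, f z ∂μ ≤
      r * (r ^ (-s) * ∫ _ in cthickening r A, (1 : ℝ) ∂μ) := by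
    filter_upwards [self_mem_nhdsWithin] with r hr
    rw [mul_left_comm, ← integral_const_mul r]
    simp only [mul_one]
    exact mul_le_mul_of_nonneg_left (setIntegral_mono_on
      (integrableOn_cthickening hA f.continuous r) (integrableOn_cthickening hA continuous_const r)
      isClosed_cthickening.measurableSet fun z hz => (min_le_left _ _).trans
        ((mem_cthickening_iff_infDist_le hm.nonempty (le_of_lt hr)).1 hz))
      (Real.rpow_nonneg (le_of_lt hr) _)
  have hzero : ∫ z, f z ∂m = 0 :=
    le_antisymm (le_of_tendsto_of_tendsto (hm.tendsto_integral f) hlim hle) (integral_nonneg hf)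
  filter_upwards [(integral_eq_zero_iff_of_nonneg hf (f.integrable m)).1 hzero] with z hz
  rw [hA.isClosed.mem_iff_infDist_zero hm.nonempty]
  exact ((min_eq_iff.1 hz).resolve_right fun h => one_ne_zero h.1).1

theorem integrable_of_continuousOn (hm : IsCodimOccupationMeasure μ s A m) (hA : IsCompact A)
    {f : X → ℝ} (hf : ContinuousOn f A) : Integrable f m := by
  have := hm.isFiniteMeasure
  rw [← Measure.restrict_eq_self_of_ae_mem (hm.ae_mem hA)]
  exact hf.integrableOn_compact hA

end IsCodimOccupationMeasure

namespace IsAsymptoticThickening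

variable {X : Type*} [MetricSpace X] [MeasurableSpace X] {μ m : Measure X} {s : ℝ} {A : Set X}
  {S : ℝ → Set X} {ρ : X → ℝ}

theorem continuousOn_rpow (hS : IsAsymptoticThickening S A ρ) (s : ℝ) :
    ContinuousOn (fun z => ρ z ^ s) A :=
  hS.continuousOn.rpow_const fun z hz => .inl (hS.pos z hz).ne'

theorem exists_eventually_sandwich (hS : IsAsymptoticThickening S A ρ) {a : X} (ha : a ∈ A)
    (s : ℝ) {ε : ℝ} (hε : 0 < ε) :
    ∃ T₁ > 0, ∃ T₂ > 0, ∀ᶠ z in 𝓝 a,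
      (∀ r > 0, (infDist z A ≤ r * T₁ → z ∈ S r) ∧ (z ∈ S r → infDist z A ≤ r * T₂)) ∧
      (z ∈ A → ρ z ^ s ≤ T₁ ^ s + ε ∧ T₂ ^ s ≤ ρ z ^ s + ε) := by
  have hpow : ∀ᶠ t in 𝓝 (ρ a), |t ^ s - ρ a ^ s| < ε / 2 :=
    (Real.continuousAt_rpow_const _ s (.inl (hS.pos a ha).ne')).eventually_mem
      (Metric.ball_mem_nhds _ (half_pos hε))
  obtain ⟨T₁, ⟨hT₁, hT₁ρ⟩, hT₁s⟩ := (((hpow.and (lt_mem_nhds (hS.pos a ha))).filter_mono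
    nhdsWithin_le_nhds).and (eventually_mem_nhdsWithin (s := Iio (ρ a)))).exists
  obtain ⟨T₂, hT₂, hT₂s⟩ := ((hpow.filter_mono nhdsWithin_le_nhds).and
    (eventually_mem_nhdsWithin (s := Ioi (ρ a)))).exists
  refine ⟨T₁, hT₁ρ, T₂, (hS.pos a ha).trans hT₂s, ?_⟩
  filter_upwards [hS.mem_of_infDist_le a ha T₁ hT₁ρ hT₁s, hS.infDist_le_of_mem a ha T₂ hT₂s,
    eventually_nhdsWithin_iff.1 ((hS.continuousOn a ha).eventually hpow)] with z hz₁ hz₂ hzA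
  refine ⟨fun r hr => ⟨hz₁ r hr, hz₂ r hr⟩, fun hz => ?_⟩
  have hz' := abs_lt.1 (hzA hz)
  rw [abs_lt] at hT₁ hT₂
  constructor <;> linarith

variable [ProperSpace X] [BorelSpace X] [IsFiniteMeasureOnCompacts μ]

theorem integrable_mul_rpow (hS : IsAsymptoticThickening S A ρ) (hA : IsCompact A)
    (hm : IsCodimOccupationMeasure μ s A m) {G : X → ℝ} (hG : Continuous G) :
    Integrable (fun z => G z * ρ z ^ s) m :=
  hm.integrable_of_continuousOn hA (hG.continuousOn.mul (hS.continuousOn_rpow s))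

theorem eventually_abs_setIntegral_sub_integral_le (hS : IsAsymptoticThickening S A ρ)
    (hA : IsCompact A) (hm : IsCodimOccupationMeasure μ s A m) {ε T₁ T₂ : ℝ} (hT₁ : 0 < T₁)
    (hT₂ : 0 < T₂) {G : X → ℝ} (hG : Continuous G) (hGc : HasCompactSupport G) (hG₀ : 0 ≤ G)
    (hsub : ∀ z, G z ≠ 0 → ∀ r > 0,
      (infDist z A ≤ r * T₁ → z ∈ S r) ∧ (z ∈ S r → infDist z A ≤ r * T₂))
    (hpow : ∀ z, G z ≠ 0 → z ∈ A → ρ z ^ s ≤ T₁ ^ s + ε ∧ T₂ ^ s ≤ ρ z ^ s + ε)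
    {η : ℝ} (hη : 0 < η) :
    ∀ᶠ r : ℝ in 𝓝[>] 0, |r ^ (-s) * ∫ z in S r, G z ∂μ - ∫ z, G z * ρ z ^ s ∂m| ≤
      ε * ∫ z, G z ∂m + η := by
  obtain ⟨g, rfl⟩ := exists_boundedContinuousFunction_eq_of_hasCompactSupport hG hGc
  have hgμ : Integrable g μ := hG.integrable_of_hasCompactSupport hGc
  have hgm : Integrable g m := hm.integrable_of_continuousOn hA hG.continuousOn
  have hgρ : Integrable (fun z => g z * ρ z ^ s) m := hS.integrable_mul_rpow hA hm hG
  have hlower : ∫ z, g z * ρ z ^ s ∂m ≤ T₁ ^ s * ∫ z, g z ∂m + ε * ∫ z, g z ∂m := by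
    rw [← add_mul, ← integral_const_mul]
    refine integral_mono_ae hgρ (hgm.const_mul _) ((hm.ae_mem hA).mono fun z hz => ?_)
    by_cases h : g z = 0
    · simp [h]
    · simpa only [mul_comm] using mul_le_mul_of_nonneg_left (hpow z h hz).1 (hG₀ z)
  have hupper : T₂ ^ s * ∫ z, g z ∂m ≤ ∫ z, g z * ρ z ^ s ∂m + ε * ∫ z, g z ∂m := by
    rw [← integral_const_mul, ← integral_const_mul, ← integral_add hgρ (hgm.const_mul _)]
    refine integral_mono_ae (hgm.const_mul _) (hgρ.add (hgm.const_mul _))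
      ((hm.ae_mem hA).mono fun z hz => ?_)
    by_cases h : g z = 0
    · simp [h]
    · nlinarith [mul_le_mul_of_nonneg_left (hpow z h hz).2 (hG₀ z)]
  have hmem {r T : ℝ} (hr : 0 < r) (hT : 0 < T) (z : X) :
      z ∈ cthickening (r * T) A ↔ infDist z A ≤ r * T :=
    mem_cthickening_iff_infDist_le hm.nonempty (mul_pos hr hT).le
  filter_upwards [self_mem_nhdsWithin,
    (hm.tendsto_integral_mul_radius hT₁ g).eventually (lt_mem_nhds (sub_lt_self _ hη)),
    (hm.tendsto_integral_mul_radius hT₂ g).eventually (gt_mem_nhds (lt_add_of_pos_right _ hη))]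
    with r hr hr₁ hr₂
  have hle₁ : r ^ (-s) * ∫ z in cthickening (r * T₁) A, g z ∂μ ≤ r ^ (-s) * ∫ z in S r, g z ∂μ :=
    mul_le_mul_of_nonneg_left (setIntegral_le_setIntegral_of_forall_ne_zero hG₀
      isClosed_cthickening.measurableSet hgμ.integrableOn fun z hz hgz =>
        (hsub z hgz r hr).1 ((hmem hr hT₁ z).1 hz)) (Real.rpow_nonneg (le_of_lt hr) _)
  have hle₂ : r ^ (-s) * ∫ z in S r, g z ∂μ ≤ r ^ (-s) * ∫ z in cthickening (r * T₂) A, g z ∂μ :=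
    mul_le_mul_of_nonneg_left (setIntegral_le_setIntegral_of_forall_ne_zero hG₀
      (hS.measurableSet r) hgμ.integrableOn fun z hz hgz =>
        (hmem hr hT₂ z).2 ((hsub z hgz r hr).2 hz)) (Real.rpow_nonneg (le_of_lt hr) _)
  rw [abs_le]
  constructor <;> linarith

theorem tendsto_setIntegral (hS : IsAsymptoticThickening S A ρ) (hA : IsCompact A)
    (hm : IsCodimOccupationMeasure μ s A m) {U : Set X} (hU : IsOpen U) (hAU : A ⊆ U) {F : X → ℝ}
    (hF : ContinuousOn F U) (hF₀ : ∀ z ∈ U, 0 ≤ F z) :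
    Tendsto (fun r : ℝ => r ^ (-s) * ∫ z in S r, F z ∂μ) (𝓝[>] 0)
      (𝓝 (∫ z, F z * ρ z ^ s ∂m)) := by
  rw [Metric.tendsto_nhds]
  intro ε hε
  obtain ⟨δ, hδ, hδε⟩ := exists_pos_mul_lt hε (∫ z, F z ∂m)
  choose! T₁ hT₁ T₂ hT₂ hsand using fun a (ha : a ∈ A) => hS.exists_eventually_sandwich ha s hδ
  obtain ⟨n, a, G, haA, hGP, hG, hGc, hG₀, hsum⟩ :=
    exists_sum_eq_of_forall_mem_nhds hA hU hAU hF hF₀ hsand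
  obtain ⟨η, hη, hηε⟩ := exists_pos_mul_lt (sub_pos.2 hδε) n
  have hlocal := eventually_all.2 fun i =>
    hS.eventually_abs_setIntegral_sub_integral_le hA hm (hT₁ _ (haA i)) (hT₂ _ (haA i)) (hG i)
      (hGc i) (hG₀ i) (fun z hz => (hGP i z hz).1) (fun z hz => (hGP i z hz).2) hη
  have hFm : ∫ z, F z ∂m = ∑ i, ∫ z, G i z ∂m := by
    rw [← integral_finsetSum _ fun i _ => hm.integrable_of_continuousOn hA (hG i).continuousOn]
    exact integral_congr_ae ((hm.ae_mem hA).mono fun z hz => (hsum.self_of_nhdsSet z hz).symm)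
  have hFρ : ∫ z, F z * ρ z ^ s ∂m = ∑ i, ∫ z, G i z * ρ z ^ s ∂m := by
    rw [← integral_finsetSum _ fun i _ => hS.integrable_mul_rpow hA hm (hG i)]
    refine integral_congr_ae ((hm.ae_mem hA).mono fun z hz => ?_)
    simp only [← Finset.sum_mul, hsum.self_of_nhdsSet z hz]
  filter_upwards [hlocal, hS.eventually_subset _ hsum] with r hr hSr
  have hFS : ∫ z in S r, F z ∂μ = ∑ i, ∫ z in S r, G i z ∂μ := by
    rw [← integral_finsetSum _ fun i _ =>
      ((hG i).integrable_of_hasCompactSupport (hGc i)).integrableOn]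
    exact setIntegral_congr_fun (hS.measurableSet r) fun z hz => (hSr hz).symm
  rw [Real.dist_eq]
  calc |r ^ (-s) * ∫ z in S r, F z ∂μ - ∫ z, F z * ρ z ^ s ∂m|
      = |∑ i, (r ^ (-s) * ∫ z in S r, G i z ∂μ - ∫ z, G i z * ρ z ^ s ∂m)| := by
        rw [hFS, hFρ, Finset.mul_sum, Finset.sum_sub_distrib]
    _ ≤ ∑ i, (δ * ∫ z, G i z ∂m + η) :=
        (Finset.abs_sum_le_sum_abs _ _).trans (Finset.sum_le_sum fun i _ => hr i)
    _ = (∫ z, F z ∂m) * δ + n * η := by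
        rw [hFm, Finset.sum_add_distrib, ← Finset.mul_sum, mul_comm]; simp
    _ < ε := by linarith

end IsAsymptoticThickening

end ThickeningLimit

section ConformalMap

open Filter Metric Set Topology Module Function
open scoped NNReal

/-- `φ` is a conformal map on the open set `U`, possibly orientation-reversing: it is injective
and `C¹` there, and its derivative at `x` is a similarity of ratio `c x > 0`. -/
structure IsConformalOn {E : Type*} [NormedAddCommGroup E] [NormedSpace ℝ E] (φ : E → E)
    (c : E → ℝ) (U : Set E) : Prop where
  isOpen : IsOpen U
  injOn : InjOn φ U
  contDiffOn : ContDiffOn ℝ 1 φ U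
  ratio_pos : ∀ x ∈ U, 0 < c x
  norm_fderiv : ∀ x ∈ U, ∀ v, ‖fderiv ℝ φ x v‖ = c x * ‖v‖

theorem eventually_cthickening_subset {X : Type*} [PseudoMetricSpace X] {K V : Set X}
    (hK : IsCompact K) (hV : V ∈ 𝓝ˢ K) : ∀ᶠ r in 𝓝[>] 0, cthickening r K ⊆ V := by
  obtain ⟨δ, hδ, hδV⟩ := (hasBasis_nhdsSet_cthickening hK).mem_iff.1 hV
  filter_upwards [Ioo_mem_nhdsGT hδ] with r hr
  exact (cthickening_mono hr.2.le K).trans hδV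

theorem eventually_infDist_image_le_of_hasStrictFDerivAt {𝕜 E F : Type*}
    [NontriviallyNormedField 𝕜] [NormedAddCommGroup E] [NormedSpace 𝕜 E] [NormedAddCommGroup F]
    [NormedSpace 𝕜 F] {f : E → F} {f' : E →L[𝕜] F} {a : E} (hf : HasStrictFDerivAt f f' a)
    {A : Set E} (hA : IsCompact A) (ha : a ∈ A) {T : ℝ} (hT : ‖f'‖ < T) :
    ∀ᶠ z in 𝓝 a, infDist (f z) (f '' A) ≤ T * infDist z A := by
  lift T to ℝ≥0 using (norm_nonneg f').trans hT.le
  obtain ⟨s, hs, hlip⟩ := hf.exists_lipschitzOnWith_of_nnnorm_lt T hT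
  obtain ⟨ε, hε, hεs⟩ := Metric.mem_nhds_iff.1 hs
  filter_upwards [ball_mem_nhds a (half_pos hε)] with z hz
  obtain ⟨y, hyA, hy⟩ := hA.exists_infDist_eq_dist ⟨a, ha⟩ z
  have hyz : dist y z ≤ dist z a := by
    rw [dist_comm, ← hy]; exact infDist_le_dist_of_mem ha
  have hya : dist y a < ε := by
    linarith [dist_triangle y z a, mem_ball.1 hz]
  calc infDist (f z) (f '' A) ≤ dist (f z) (f y) := infDist_le_dist_of_mem (mem_image_of_mem f hyA)
    _ ≤ T * dist z y :=
      hlip.dist_le_mul z (hεs (ball_subset_ball (half_le_self hε.le) hz)) y (hεs hya)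
    _ = T * infDist z A := by rw [hy]

theorem abs_det_eq_pow_of_norm_apply_eq_mul {E : Type*} [NormedAddCommGroup E] [NormedSpace ℝ E]
    [FiniteDimensional ℝ E] {c : ℝ} (hc : 0 < c) {e : E ≃L[ℝ] E} (he : ∀ v, ‖e v‖ = c * ‖v‖) :
    |(e : E →L[ℝ] E).det| = c ^ finrank ℝ E := by
  borelize E
  let μ : Measure E := Measure.addHaar
  have himage : e '' closedBall 0 1 = closedBall 0 c := by
    ext v
    rw [e.image_eq_preimage_symm, mem_preimage, mem_closedBall_zero_iff, mem_closedBall_zero_iff,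
      ← mul_le_mul_iff_right₀ hc, ← he, e.apply_symm_apply, mul_one]
  have hμ := μ.addHaar_image_continuousLinearEquiv e (closedBall 0 1)
  rw [himage, μ.addHaar_closedBall 0 hc.le, μ.addHaar_closedBall 0 zero_le_one, one_pow,
    ENNReal.ofReal_one, one_mul, ENNReal.mul_left_inj (measure_ball_pos μ 0 one_pos).ne'
    measure_ball_lt_top.ne, ENNReal.ofReal_eq_ofReal_iff (by positivity) (abs_nonneg _)] at hμ
  exact hμ.symm

theorem aemeasurable_of_continuousOn_of_ae_mem {X Y : Type*} [TopologicalSpace X]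
    [MeasurableSpace X] [OpensMeasurableSpace X] [TopologicalSpace Y] [MeasurableSpace Y]
    [BorelSpace Y] {m : Measure X} {A : Set X} (hA : MeasurableSet A) (hm : ∀ᵐ z ∂m, z ∈ A)
    {f : X → Y} (hf : ContinuousOn f A) : AEMeasurable f m := by
  rw [← Measure.restrict_eq_self_of_ae_mem hm]
  exact hf.aemeasurable hA

theorem withDensity_map {X Y : Type*} [MeasurableSpace X] [MeasurableSpace Y] {m : Measure X}
    {φ : X → Y} (hφ : AEMeasurable φ m) {k : Y → ENNReal} (hk : AEMeasurable k (m.map φ)) :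
    (m.map φ).withDensity k = (m.withDensity (k ∘ φ)).map φ := by
  ext s hs
  rw [withDensity_apply _ hs, Measure.map_apply_of_aemeasurable
    (hφ.mono_ac (withDensity_absolutelyContinuous m _)) hs, ← lintegral_indicator hs,
    lintegral_map' (hk.indicator hs) hφ]
  rw [withDensity_apply₀ _ (hφ.nullMeasurable hs), ← lintegral_indicator₀ (hφ.nullMeasurable hs)]
  rfl

namespace IsConformalOn

variable {E : Type*} [NormedAddCommGroup E] [NormedSpace ℝ E] {φ : E → E} {c : E → ℝ} {U : Set E}
  {x : E}

theorem hasStrictFDerivAt (h : IsConformalOn φ c U) (hx : x ∈ U) :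
    HasStrictFDerivAt φ (fderiv ℝ φ x) x :=
  (h.contDiffOn.contDiffAt (h.isOpen.mem_nhds hx)).hasStrictFDerivAt one_ne_zero

theorem invFunOn_apply (h : IsConformalOn φ c U) (hx : x ∈ U) : invFunOn φ U (φ x) = x :=
  h.injOn.leftInvOn_invFunOn hx

theorem continuousOn_ratio (h : IsConformalOn φ c U) : ContinuousOn c U := by
  cases subsingleton_or_nontrivial E
  · exact continuous_of_discreteTopology.continuousOn
  obtain ⟨v, hv⟩ := exists_norm_eq E zero_le_one
  refine ((h.contDiffOn.continuousOn_fderiv_of_isOpen h.isOpen le_rfl).clm_apply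
    continuousOn_const).norm.congr (f := fun x => ‖fderiv ℝ φ x v‖) fun x hx => ?_
  simp [h.norm_fderiv x hx, hv]

theorem eventually_infDist_image_le (h : IsConformalOn φ c U) {A : Set E} (hA : IsCompact A)
    (hx : x ∈ U) (hxA : x ∈ A) {T : ℝ} (hT : c x < T) :
    ∀ᶠ z in 𝓝 x, infDist (φ z) (φ '' A) ≤ T * infDist z A :=
  eventually_infDist_image_le_of_hasStrictFDerivAt (h.hasStrictFDerivAt hx) hA hxA <|
    (ContinuousLinearMap.opNorm_le_bound _ (h.ratio_pos x hx).le
      fun v => (h.norm_fderiv x hx v).le).trans_lt hT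

theorem continuousOn_ratio_rpow (h : IsConformalOn φ c U) (d : ℝ) :
    ContinuousOn (fun z => c z ^ d) U :=
  h.continuousOn_ratio.rpow_const fun z hz => .inl (h.ratio_pos z hz).ne'

variable [FiniteDimensional ℝ E]

theorem exists_hasStrictFDerivAt_equiv (h : IsConformalOn φ c U) (hx : x ∈ U) :
    ∃ e : E ≃L[ℝ] E, (∀ v, ‖e v‖ = c x * ‖v‖) ∧ HasStrictFDerivAt φ (e : E →L[ℝ] E) x := by
  have hinj : Injective (fderiv ℝ φ x) :=
    (injective_iff_map_eq_zero _).2 fun v hv => by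
      simpa [hv, (h.ratio_pos x hx).ne'] using h.norm_fderiv x hx v
  let e := (LinearEquiv.ofInjectiveEndo (fderiv ℝ φ x : E →ₗ[ℝ] E) hinj).toContinuousLinearEquiv
  have he : (e : E →L[ℝ] E) = fderiv ℝ φ x := ContinuousLinearMap.ext fun _ => rfl
  exact ⟨e, h.norm_fderiv x hx, he ▸ h.hasStrictFDerivAt hx⟩

theorem map_nhds_eq (h : IsConformalOn φ c U) (hx : x ∈ U) : map φ (𝓝 x) = 𝓝 (φ x) :=
  let ⟨_, _, hφ⟩ := h.exists_hasStrictFDerivAt_equiv hx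
  hφ.map_nhds_eq_of_equiv

theorem image_mem_nhdsSet (h : IsConformalOn φ c U) {A V : Set E} (hAU : A ⊆ U) (hV : V ∈ 𝓝ˢ A) :
    φ '' V ∈ 𝓝ˢ (φ '' A) :=
  mem_nhdsSet_iff_forall.2 <| forall_mem_image.2 fun a ha =>
    h.map_nhds_eq (hAU ha) ▸ image_mem_map (mem_nhdsSet_iff_forall.1 hV a ha)

theorem continuousOn_invFunOn (h : IsConformalOn φ c U) :
    ContinuousOn (invFunOn φ U) (φ '' U) := by
  rintro _ ⟨x, hx, rfl⟩
  obtain ⟨e, -, hφ⟩ := h.exists_hasStrictFDerivAt_equiv hx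
  exact (hφ.to_local_left_inverse (eventually_of_mem (h.isOpen.mem_nhds hx)
    fun _ => h.invFunOn_apply)).continuousAt.continuousWithinAt

theorem eventually_infDist_le_image (h : IsConformalOn φ c U) {A : Set E} (hA : IsCompact A)
    (hAU : A ⊆ U) (hxA : x ∈ A) {T : ℝ} (hT : (c x)⁻¹ < T) :
    ∀ᶠ z in 𝓝 x, infDist z A ≤ T * infDist (φ z) (φ '' A) := by
  have hx := hAU hxA
  obtain ⟨e, he, hφ⟩ := h.exists_hasStrictFDerivAt_equiv hx
  have hU := eventually_of_mem (h.isOpen.mem_nhds hx) fun _ => h.invFunOn_apply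
  have he' : ‖(e.symm : E →L[ℝ] E)‖ ≤ (c x)⁻¹ :=
    ContinuousLinearMap.opNorm_le_bound _ (inv_pos.2 (h.ratio_pos x hx)).le fun v => by
      rw [inv_mul_eq_div, le_div_iff₀' (h.ratio_pos x hx)]
      simpa using (he (e.symm v)).ge
  have hψ := eventually_infDist_image_le_of_hasStrictFDerivAt (hφ.to_local_left_inverse hU)
    (hA.image_of_continuousOn (h.contDiffOn.continuousOn.mono hAU)) (mem_image_of_mem φ hxA)
    (he'.trans_lt hT)
  filter_upwards [hφ.continuousAt.eventually hψ, hU] with z hz hzU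
  rwa [hzU, (h.injOn.leftInvOn_invFunOn.mono hAU).image_image] at hz

theorem abs_det_fderiv (h : IsConformalOn φ c U) (hx : x ∈ U) :
    |(fderiv ℝ φ x).det| = c x ^ finrank ℝ E := by
  obtain ⟨e, he, hφ⟩ := h.exists_hasStrictFDerivAt_equiv hx
  rw [hφ.hasFDerivAt.fderiv, abs_det_eq_pow_of_norm_apply_eq_mul (h.ratio_pos x hx) he]

variable [MeasurableSpace E] [BorelSpace E]

theorem isAsymptoticThickening (h : IsConformalOn φ c U) {A : Set E} (hA : IsCompact A)
    (hAU : A ⊆ U) :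
    IsAsymptoticThickening (fun r => U ∩ φ ⁻¹' cthickening r (φ '' A)) A fun z => (c z)⁻¹ where
  measurableSet r := by
    have hopen := h.contDiffOn.continuousOn.isOpen_inter_preimage h.isOpen
      (isClosed_cthickening (δ := r) (E := φ '' A)).isOpen_compl
    convert h.isOpen.measurableSet.diff hopen.measurableSet using 1
    ext; simp +contextual
  eventually_subset V hV := by
    filter_upwards [eventually_cthickening_subset
      (hA.image_of_continuousOn (h.contDiffOn.continuousOn.mono hAU))
      (h.image_mem_nhdsSet hAU (inter_mem hV (h.isOpen.mem_nhdsSet.2 hAU)))] with r hr z hz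
    exact ((h.injOn.mem_image_iff inter_subset_right hz.1).1 (hr hz.2)).1
  pos a ha := inv_pos.2 (h.ratio_pos a (hAU ha))
  continuousOn := (h.continuousOn_ratio.mono hAU).inv₀ fun a ha => (h.ratio_pos a (hAU ha)).ne'
  mem_of_infDist_le a ha T hT hTa := by
    filter_upwards [h.eventually_infDist_image_le hA (hAU ha) ha
      ((lt_inv_comm₀ hT (h.ratio_pos a (hAU ha))).1 hTa), h.isOpen.mem_nhds (hAU ha)]
      with z hz hzU r hr hzr
    refine ⟨hzU, (mem_cthickening_iff_infDist_le ⟨φ a, mem_image_of_mem φ ha⟩ hr.le).2 ?_⟩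
    calc infDist (φ z) (φ '' A) ≤ T⁻¹ * infDist z A := hz
      _ ≤ T⁻¹ * (r * T) := by gcongr
      _ = r := by field_simp
  infDist_le_of_mem a ha T hTa := by
    filter_upwards [h.eventually_infDist_le_image hA hAU ha hTa] with z hz r hr hzr
    have hT : 0 < T := (inv_pos.2 (h.ratio_pos a (hAU ha))).trans hTa
    calc infDist z A ≤ T * infDist (φ z) (φ '' A) := hz
      _ ≤ T * r := by
        gcongr
        exact (mem_cthickening_iff_infDist_le ⟨φ a, mem_image_of_mem φ ha⟩ hr.le).1 hzr.2
      _ = r * T := mul_comm T r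

variable {μ m : Measure E} [μ.IsAddHaarMeasure] {A : Set E} {d : ℝ}

theorem setIntegral_eq_setIntegral_inter_preimage (h : IsConformalOn φ c U) {T : Set E}
    (hTU : T ⊆ φ '' U) (hT : MeasurableSet (U ∩ φ ⁻¹' T)) (g : E → ℝ) :
    ∫ w in T, g w ∂μ = ∫ z in U ∩ φ ⁻¹' T, c z ^ finrank ℝ E * g (φ z) ∂μ := by
  conv_lhs => rw [← inter_eq_right.2 hTU, ← image_inter_preimage]
  rw [integral_image_eq_integral_abs_det_fderiv_smul μ hT (fun z hz =>
    (h.hasStrictFDerivAt hz.1).hasFDerivAt.hasFDerivWithinAt) (h.injOn.mono inter_subset_left)]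
  refine setIntegral_congr_fun hT fun z hz => ?_
  simp only [h.abs_det_fderiv hz.1, smul_eq_mul]

theorem tendsto_integral_image (h : IsConformalOn φ c U) (hA : IsCompact A) (hAU : A ⊆ U)
    (hm : IsCodimOccupationMeasure μ (finrank ℝ E - d) A m) {g : E → ℝ} (hg : Continuous g)
    (hg₀ : 0 ≤ g) :
    Tendsto (fun r : ℝ => r ^ (-(finrank ℝ E - d)) * ∫ w in cthickening r (φ '' A), g w ∂μ)
      (𝓝[>] 0) (𝓝 (∫ z, c z ^ d * g (φ z) ∂m)) := by
  have hS := h.isAsymptoticThickening hA hAU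
  have hlim := hS.tendsto_setIntegral hA hm h.isOpen hAU
    (F := fun z => c z ^ finrank ℝ E * g (φ z))
    ((h.continuousOn_ratio.pow _).mul (hg.comp_continuousOn h.contDiffOn.continuousOn))
    fun z hz => mul_nonneg (pow_nonneg (h.ratio_pos z hz).le _) (hg₀ _)
  have hpow : ∀ᵐ z ∂m, c z ^ finrank ℝ E * g (φ z) * (c z)⁻¹ ^ (finrank ℝ E - d) =
      c z ^ d * g (φ z) := by
    filter_upwards [hm.ae_mem hA] with z hz
    have hc := h.ratio_pos z (hAU hz)
    rw [Real.inv_rpow hc.le, ← Real.rpow_neg hc.le, neg_sub, Real.rpow_sub hc, Real.rpow_natCast]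
    field_simp
  rw [← integral_congr_ae hpow]
  refine hlim.congr' ?_
  filter_upwards [eventually_cthickening_subset
    (hA.image_of_continuousOn (h.contDiffOn.continuousOn.mono hAU))
    (h.image_mem_nhdsSet hAU (h.isOpen.mem_nhdsSet.2 hAU))] with r hr
  rw [h.setIntegral_eq_setIntegral_inter_preimage hr (hS.measurableSet r)]

theorem isCodimOccupationMeasure_map_withDensity (h : IsConformalOn φ c U) (hA : IsCompact A)
    (hAU : A ⊆ U) (hm : IsCodimOccupationMeasure μ (finrank ℝ E - d) A m) :
    IsCodimOccupationMeasure μ (finrank ℝ E - d) (φ '' A)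
      ((m.withDensity fun z => ENNReal.ofReal (c z ^ d)).map φ) := by
  have hφA := h.contDiffOn.continuousOn.mono hAU
  have hcd : Integrable (fun z => c z ^ d) m :=
    hm.integrable_of_continuousOn hA ((h.continuousOn_ratio_rpow d).mono hAU)
  have hcd₀ : ∀ᵐ z ∂m, 0 < c z ^ d :=
    (hm.ae_mem hA).mono fun z hz => Real.rpow_pos_of_pos (h.ratio_pos z (hAU hz)) d
  have hφ : AEMeasurable φ (m.withDensity fun z => ENNReal.ofReal (c z ^ d)) :=
    (aemeasurable_of_continuousOn_of_ae_mem hA.measurableSet (hm.ae_mem hA) hφA).mono_ac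
      (withDensity_absolutelyContinuous m _)
  have huniv : (m.withDensity fun z => ENNReal.ofReal (c z ^ d)).map φ univ =
      ∫⁻ z, ENNReal.ofReal (c z ^ d) ∂m := by
    rw [Measure.map_apply_of_aemeasurable hφ .univ, preimage_univ, withDensity_apply _ .univ,
      Measure.restrict_univ]
  refine .of_nonneg (hA.image_of_continuousOn hφA) (fun h₀ => ?_) ?_ fun g hg₀ => ?_
  · rw [huniv, lintegral_eq_zero_iff' hcd.aemeasurable.ennreal_ofReal] at h₀
    have hfalse : ∀ᵐ _ ∂m, False := by
      filter_upwards [h₀, hcd₀] with z hz hz₀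
      exact (ENNReal.ofReal_pos.2 hz₀).ne' hz
    exact hm.univ_ne_zero (by simpa [ae_iff] using hfalse)
  · rw [huniv]
    exact hcd.lintegral_lt_top.ne
  · rw [integral_map hφ g.continuous.aestronglyMeasurable,
      integral_withDensity_eq_integral_toReal_smul₀ hcd.aemeasurable.ennreal_ofReal
        (.of_forall fun _ => ENNReal.ofReal_lt_top)]
    convert h.tendsto_integral_image hA hAU hm g.continuous hg₀ using 2
    refine integral_congr_ae (hcd₀.mono fun z hz => ?_)
    simp only [ENNReal.toReal_ofReal hz.le, smul_eq_mul]

theorem withDensity_map_eq_map_withDensity (h : IsConformalOn φ c U) (hA : IsCompact A)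
    (hAU : A ⊆ U) (hm : ∀ᵐ z ∂m, z ∈ A) (d : ℝ) :
    (m.map φ).withDensity (fun w => ENNReal.ofReal (c (invFunOn φ U w) ^ d)) =
      (m.withDensity fun z => ENNReal.ofReal (c z ^ d)).map φ := by
  have hφA := h.contDiffOn.continuousOn.mono hAU
  have hφ : AEMeasurable φ m := aemeasurable_of_continuousOn_of_ae_mem hA.measurableSet hm hφA
  have himage : MeasurableSet (φ '' A) := (hA.image_of_continuousOn hφA).measurableSet
  have hdensity : ContinuousOn (fun w => ENNReal.ofReal (c (invFunOn φ U w) ^ d)) (φ '' A) :=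
    ENNReal.continuous_ofReal.comp_continuousOn <| (h.continuousOn_ratio_rpow d).comp
      (h.continuousOn_invFunOn.mono (image_mono hAU))
      (forall_mem_image.2 fun z hz => (h.invFunOn_apply (hAU hz)).symm ▸ hAU hz)
  rw [withDensity_map hφ <| aemeasurable_of_continuousOn_of_ae_mem himage
    ((ae_map_iff hφ himage).2 (hm.mono fun z hz => mem_image_of_mem φ hz)) hdensity]
  congr 1
  refine withDensity_congr_ae (hm.mono fun z hz => ?_)
  simp only [comp_apply, h.invFunOn_apply (hAU hz)]

end IsConformalOn

theorem occupationMeasure_conformal_covariance_general {E : Type*} [NormedAddCommGroup E]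
    [NormedSpace ℝ E] [FiniteDimensional ℝ E] [MeasurableSpace E] [BorelSpace E] {μ m : Measure E}
    [μ.IsAddHaarMeasure] {d : ℝ} {A U : Set E} {φ : E → E} {c : E → ℝ} (hA : IsCompact A)
    (hm : IsCodimOccupationMeasure μ (finrank ℝ E - d) A m) (hφ : IsConformalOn φ c U)
    (hAU : A ⊆ U) :
    IsCodimOccupationMeasure μ (finrank ℝ E - d) (φ '' A)
      ((m.map φ).withDensity fun w => ENNReal.ofReal (c (invFunOn φ U w) ^ d)) :=
  hφ.withDensity_map_eq_map_withDensity hA hAU (hm.ae_mem hA) d ▸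
    hφ.isCodimOccupationMeasure_map_withDensity hA hAU hm

end ConformalMap

section Complex

open Filter Metric Set Topology Module Function

theorem not_eventually_eq_const_of_injOn {X Y : Type*} [TopologicalSpace X] {f : X → Y} {s : Set X}
    {a : X} [(𝓝[≠] a).NeBot] (hs : s ∈ 𝓝 a) (hf : InjOn f s) (y : Y) :
    ¬ ∀ᶠ z in 𝓝 a, f z = y := fun h => by
  obtain ⟨z, ⟨hzy, hzs⟩, hza⟩ :=
    (((h.and hs).filter_mono nhdsWithin_le_nhds).and (eventually_mem_nhdsWithin (s := {a}ᶜ))).exists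
  exact hza (hf hzs (mem_of_mem_nhds hs) (hzy.trans h.self_of_nhds.symm))

section Univalent

variable {f : ℂ → ℂ} {U : Set ℂ} {a : ℂ}

theorem nhds_le_map_nhds_of_injOn (hU : IsOpen U) (hf : DifferentiableOn ℂ f U) (hinj : InjOn f U)
    (ha : a ∈ U) : 𝓝 (f a) ≤ map f (𝓝 a) :=
  (hf.analyticAt (hU.mem_nhds ha)).eventually_constant_or_nhds_le_map_nhds.resolve_left
    (not_eventually_eq_const_of_injOn (hU.mem_nhds ha) hinj _)

theorem continuousAt_invFunOn_of_injOn (hU : IsOpen U) (hf : DifferentiableOn ℂ f U)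
    (hinj : InjOn f U) (ha : a ∈ U) : ContinuousAt (invFunOn f U) (f a) := by
  have hid : invFunOn f U ∘ f =ᶠ[𝓝 a] id :=
    eventually_of_mem (hU.mem_nhds ha) fun z hz => hinj.leftInvOn_invFunOn hz
  rw [ContinuousAt, hinj.leftInvOn_invFunOn ha]
  exact (tendsto_map'_iff.2 (tendsto_id.congr' hid.symm)).mono_left
    (nhds_le_map_nhds_of_injOn hU hf hinj ha)

theorem eventually_deriv_ne_zero_of_injOn (hU : IsOpen U) (hf : DifferentiableOn ℂ f U)
    (hinj : InjOn f U) (ha : a ∈ U) : ∀ᶠ z in 𝓝[≠] a, deriv f z ≠ 0 := by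
  have hderiv := (hf.analyticAt (hU.mem_nhds ha)).deriv
  refine hderiv.eventually_eq_zero_or_eventually_ne_zero.resolve_left fun h => ?_
  obtain ⟨ε, hε, hball⟩ := Metric.eventually_nhds_iff_ball.1 (h.and (hU.mem_nhds ha))
  have hconst : ∀ᶠ z in 𝓝 a, f z = f a := eventually_of_mem (ball_mem_nhds a hε) fun z hz =>
    isOpen_ball.is_const_of_deriv_eq_zero (convex_ball a ε).isPreconnected
      (hf.mono fun w hw => (hball w hw).2) (fun w hw => (hball w hw).1) hz (mem_ball_self hε)
  exact not_eventually_eq_const_of_injOn (hU.mem_nhds ha) hinj _ hconst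

-- The inverse is continuous, and holomorphic off a discrete set, hence holomorphic.
theorem differentiableAt_invFunOn_of_injOn (hU : IsOpen U) (hf : DifferentiableOn ℂ f U)
    (hinj : InjOn f U) (ha : a ∈ U) : DifferentiableAt ℂ (invFunOn f U) (f a) := by
  have hdiff : ∀ᶠ z in 𝓝 a, f z ≠ f a → DifferentiableAt ℂ (invFunOn f U) (f z) := by
    filter_upwards [eventually_nhdsWithin_iff.1 (eventually_deriv_ne_zero_of_injOn hU hf hinj ha),
      hU.mem_nhds ha] with z hz hzU hfz
    have hstrict := (hf.analyticAt (hU.mem_nhds hzU)).hasStrictDerivAt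
    exact (hstrict.to_local_left_inverse (hz (ne_of_apply_ne f hfz)) <| eventually_of_mem
      (hU.mem_nhds hzU) fun _ hw => hinj.leftInvOn_invFunOn hw).hasDerivAt.differentiableAt
  exact (Complex.analyticAt_of_differentiable_on_punctured_nhds_of_continuousAt
    (eventually_nhdsWithin_iff.2 (nhds_le_map_nhds_of_injOn hU hf hinj ha hdiff))
    (continuousAt_invFunOn_of_injOn hU hf hinj ha)).differentiableAt

theorem deriv_ne_zero_of_injOn (hU : IsOpen U) (hf : DifferentiableOn ℂ f U) (hinj : InjOn f U)
    (ha : a ∈ U) : deriv f a ≠ 0 := by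
  have hid : invFunOn f U ∘ f =ᶠ[𝓝 a] id :=
    eventually_of_mem (hU.mem_nhds ha) fun z hz => hinj.leftInvOn_invFunOn hz
  have hchain := deriv_comp a (differentiableAt_invFunOn_of_injOn hU hf hinj ha)
    (hf.differentiableAt (hU.mem_nhds ha))
  rw [hid.deriv_eq, deriv_id] at hchain
  exact right_ne_zero_of_mul (hchain ▸ one_ne_zero)

theorem isConformalOn_of_injOn (hU : IsOpen U) (hf : DifferentiableOn ℂ f U) (hinj : InjOn f U) :
    IsConformalOn f (fun z => ‖deriv f z‖) U where
  isOpen := hU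
  injOn := hinj
  contDiffOn := (hf.contDiffOn hU).restrict_scalars ℝ
  ratio_pos _ hz := norm_pos_iff.2 (deriv_ne_zero_of_injOn hU hf hinj hz)
  norm_fderiv z hz v := by
    rw [((hf.differentiableAt (hU.mem_nhds hz)).fderiv_restrictScalars ℝ)]
    simp [mul_comm]

end Univalent

theorem isOccupationMeasure_iff {A : Set ℂ} {d : ℝ} {m : Measure ℂ} :
    IsOccupationMeasure A d m ↔ IsCodimOccupationMeasure volume (finrank ℝ ℂ - d) A m := by
  have heq (f : BoundedContinuousFunction ℂ ℝ) : (fun r : ℝ => ∫ z, f z ∂occApprox A d r) =ᶠ[𝓝[>] 0]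
      fun r => r ^ (-(finrank ℝ ℂ - d)) * ∫ z in cthickening r A, f z := by
    filter_upwards [self_mem_nhdsWithin] with r hr
    rw [occApprox, integral_smul_measure, ENNReal.toReal_ofReal (Real.rpow_nonneg (le_of_lt hr) _),
      Complex.finrank_real_complex, smul_eq_mul, neg_sub, Nat.cast_ofNat]
  exact ⟨fun h => ⟨h.1, h.2.1, fun f => (h.2.2 f).congr' (heq f)⟩,
    fun h => ⟨h.1, h.2, fun f => (h.3 f).congr' (heq f).symm⟩⟩

end Complex

/-- Conformal covariance of occupation measures: if the compact set `A ⊆ ℂ` has a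
`d`-occupation measure `m_A` with `d ∈ (0,2)`, and `φ` is a conformal map (injective and
holomorphic) on an open set `U ⊇ A`, then `φ(A)` has a `d`-occupation measure, namely the
measure with density `w ↦ |φ'(φ⁻¹(w))|^d` with respect to the pushforward `φ_* m_A`. -/
theorem occupationMeasure_conformal_covariance
    (d : ℝ) (hd : d ∈ Set.Ioo (0 : ℝ) 2)
    (A : Set ℂ) (hA : IsCompact A)
    (mA : Measure ℂ) (hmA : IsOccupationMeasure A d mA)
    (U : Set ℂ) (hU : IsOpen U) (hAU : A ⊆ U)
    (φ : ℂ → ℂ) (hinj : Set.InjOn φ U) (hhol : DifferentiableOn ℂ φ U) :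
    IsOccupationMeasure (φ '' A) d
      ((Measure.map φ mA).withDensity
        (fun w => ENNReal.ofReal (‖deriv φ (Function.invFunOn φ U w)‖ ^ d))) :=
  isOccupationMeasure_iff.2 <| occupationMeasure_conformal_covariance_general
    (c := fun z => ‖deriv φ z‖) hA (isOccupationMeasure_iff.1 hmA)
    (isConformalOn_of_injOn hU hhol hinj) hAU
end

section
/- Let d ∈ (0, 2) and let A ⊂ ℂ be a compact set whose d-occupation measure m_A exists, and let φ : U → ℂ be a conformal map (injective holomorphic) on an open set U containing A, so that by the conformal covariance of occupation measures the d-occupation measure m_{φ(A)} of φ(A) exists. If m_A satisfies the energy condition: ∬_{U'×U'} |x − y|^{−(d−ε)} dm_A(x) dm_A(y) < ∞ for every bounded set U' ⊂ ℂ and every ε ∈ (0, d), then m_{φ(A)} satisfies the same energy condition (with m_A replaced by m_{φ(A)}). -/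
open MeasureTheory

/-- The energy condition for a measure `m` and exponent `d`:
`∬_{U'×U'} |x-y|^{-(d-ε)} dm(x) dm(y) < ∞` for all bounded `U'` and all `ε ∈ (0,d)`. -/
def EnergyCondition (m : Measure ℂ) (d : ℝ) : Prop :=
  ∀ U' : Set ℂ, Bornology.IsBounded U' → ∀ ε ∈ Set.Ioo (0 : ℝ) d,
    (∫⁻ x in U', ∫⁻ y in U', (edist x y) ^ (-(d - ε)) ∂m ∂m) < ⊤

/-!
A `K`-Lipschitz map `g` of the plane enlarges the area of `r`-neighborhoods at most by the factor
`(2 * K + 1) ^ 2`: for a maximal `2r`-separated subset `N` of `A`, the `r`-balls around `N` are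
disjoint and contained in `A_r`, while the `(2 * K + 1) * r`-balls around `g(N)` cover `g(A)_r`.
Localizing this bound and passing to the weak limit gives `m_{g(A)} ≤ (2 * K + 1) ^ 2 • g_* m_A`.
Since `m_A` is carried by `A`, the Riesz energies of `m_A` control those of `m_{g(A)}` as soon as
`g` is also antilipschitz on `A`. An injective holomorphic map is a homeomorphism onto an open set
with holomorphic inverse (off the isolated zeros of the derivative by the inverse function theorem,
at them by removability of singularities), so it is bi-Lipschitz on compact sets.
-/

open Filter Topology Set Metric
open scoped ENNReal NNReal

theorem exists_finset_isSeparated_isCover {X : Type*} [PseudoEMetricSpace X] {ε : ℝ≥0} (hε : 0 < ε)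
    {s : Set X} (hs : TotallyBounded s) :
    ∃ N : Finset X, ↑N ⊆ s ∧ IsSeparated (2 * ε) (N : Set X) ∧ IsCover (2 * ε) s N := by
  obtain ⟨N, -, hN, hcover⟩ := exists_finite_isCover_of_totallyBounded hε.ne' hs
  have hfin : packingNumber (2 * ε) s ≠ ⊤ :=
    ((packingNumber_two_mul_le_externalCoveringNumber ε s).trans
      hcover.externalCoveringNumber_le_encard |>.trans_lt hN.encard_lt_top).ne
  have : (maximalSeparatedSet (2 * ε) s).Finite :=
    encard_ne_top_iff.1 (encard_maximalSeparatedSet hfin ▸ hfin)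
  exact ⟨this.toFinset, by simpa using maximalSeparatedSet_subset,
    by simpa using isSeparated_maximalSeparatedSet (ε := 2 * ε) (A := s),
    by simpa using isCover_maximalSeparatedSet hfin⟩

section Volume

variable {E : Type*} [NormedAddCommGroup E] [MeasurableSpace E] [BorelSpace E]
  (μ : Measure E) [μ.IsAddHaarMeasure]

theorem measure_cthickening_le_of_isCover {ε : ℝ≥0} {s : Set E} {N : Finset E}
    (hN : IsCover ε s N) (r : ℝ≥0) :
    μ (cthickening r s) ≤ N.card * μ (closedBall 0 (r + ε)) := by
  have hsN : s ⊆ cthickening ε N := by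
    rw [N.finite_toSet.isCompact.cthickening_eq_biUnion_closedBall ε.coe_nonneg]
    exact isCover_iff_subset_iUnion_closedBall.1 hN
  calc μ (cthickening r s)
    _ ≤ μ (cthickening (r + ε) N) := by
        grw [cthickening_subset_of_subset r hsN,
          cthickening_cthickening_subset r.coe_nonneg ε.coe_nonneg]
    _ = μ (⋃ x ∈ N, closedBall x (r + ε)) := by
        rw [N.finite_toSet.isCompact.cthickening_eq_biUnion_closedBall (by positivity)]
        simp only [Finset.mem_coe]
    _ ≤ ∑ x ∈ N, μ (closedBall x (r + ε)) := measure_biUnion_finset_le _ _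
    _ = N.card * μ (closedBall 0 (r + ε)) := by
        simp [Measure.addHaar_closedBall_center]

theorem card_mul_measure_closedBall_le_of_isSeparated {r : ℝ≥0} {s : Set E} {N : Finset E}
    (hN : IsSeparated (2 * r) (N : Set E)) (hNs : ↑N ⊆ s) :
    N.card * μ (closedBall 0 r) ≤ μ (cthickening r s) := by
  have hdisj : (N : Set E).PairwiseDisjoint fun x => closedBall x r := fun x hx y hy hxy => by
    refine closedBall_disjoint_closedBall ?_
    have : ENNReal.ofNNReal (2 * r) < edist x y := by exact_mod_cast hN hx hy hxy
    rw [edist_nndist, ENNReal.coe_lt_coe, ← NNReal.coe_lt_coe] at this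
    simpa [two_mul] using this
  calc N.card * μ (closedBall 0 r)
    _ = ∑ x ∈ N, μ (closedBall x r) := by simp [Measure.addHaar_closedBall_center]
    _ = μ (⋃ x ∈ N, closedBall x r) :=
        (measure_biUnion_finset hdisj fun _ _ => measurableSet_closedBall).symm
    _ ≤ μ (cthickening r s) := by
        gcongr
        exact iUnion₂_subset fun x hx => closedBall_subset_cthickening (hNs hx) r

variable [NormedSpace ℝ E] [FiniteDimensional ℝ E]

theorem measure_cthickening_image_le {g : E → E} {K r : ℝ≥0} (hg : LipschitzWith K g) {s : Set E}
    (hs : TotallyBounded s) (hr : 0 < r) :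
    μ (cthickening r (g '' s)) ≤ (2 * K + 1) ^ Module.finrank ℝ E * μ (cthickening r s) := by
  classical
  obtain ⟨N, hNs, hsep, hcover⟩ := exists_finset_isSeparated_isCover hr hs
  have himage : IsCover (K * (2 * r)) (g '' s) (N.image g) := by
    simpa using hcover.image_lipschitz hg
  have hradius : (r + (K * (2 * r) : ℝ≥0) : ℝ) = (2 * K + 1 : ℝ≥0) * r := by push_cast; ring
  calc μ (cthickening r (g '' s))
    _ ≤ (N.image g).card * μ (closedBall 0 (r + (K * (2 * r) : ℝ≥0))) :=
        measure_cthickening_le_of_isCover μ himage r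
    _ ≤ N.card * μ (closedBall 0 (r + (K * (2 * r) : ℝ≥0))) := by grw [Finset.card_image_le]
    _ = (2 * K + 1) ^ Module.finrank ℝ E * (N.card * μ (closedBall 0 r)) := by
        rw [hradius, Measure.addHaar_closedBall_mul μ 0 (by positivity) r.coe_nonneg,
          ENNReal.ofReal_pow (by positivity), ENNReal.ofReal_coe_nnreal, mul_left_comm]
        push_cast
        rfl
    _ ≤ (2 * K + 1) ^ Module.finrank ℝ E * μ (cthickening r s) := by
        grw [card_mul_measure_closedBall_le_of_isSeparated μ hsep hNs]

theorem measure_inter_cthickening_image_le {g : E → E} {K r : ℝ≥0} (hg : LipschitzWith K g)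
    {A : Set E} (hA : IsCompact A) (hr : 0 < r) (S : Set E) :
    μ (S ∩ cthickening r (g '' A)) ≤ (2 * K + 1) ^ Module.finrank ℝ E *
      μ (g ⁻¹' cthickening ((K + 1) * r) S ∩ cthickening r A) := by
  set T := A ∩ g ⁻¹' cthickening r S
  have hT : IsCompact T := hA.inter_right (isClosed_cthickening.preimage hg.continuous)
  have hsource : S ∩ cthickening r (g '' A) ⊆ cthickening r (g '' T) := by
    rw [(hA.image hg.continuous).cthickening_eq_biUnion_closedBall r.coe_nonneg]
    rintro y ⟨hyS, hy⟩
    obtain ⟨_, ⟨x, hx, rfl⟩, hxy⟩ := mem_iUnion₂.1 hy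
    exact mem_cthickening_of_dist_le y (g x) r _
      ⟨x, ⟨hx, mem_cthickening_of_dist_le _ _ _ _ hyS (mem_closedBall'.1 hxy)⟩, rfl⟩ hxy
  have htarget : cthickening r T ⊆ g ⁻¹' cthickening ((K + 1) * r) S := by
    rw [hT.cthickening_eq_biUnion_closedBall r.coe_nonneg]
    refine iUnion₂_subset fun x hx z hz => ?_
    have : g z ∈ cthickening (K * r) (cthickening r S) :=
      mem_cthickening_of_dist_le _ _ _ _ hx.2 (hg.dist_le_mul_of_le hz)
    simpa [add_mul] using cthickening_cthickening_subset (by positivity) r.coe_nonneg S this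
  grw [hsource, measure_cthickening_image_le μ hg hT.totallyBounded hr,
    subset_inter htarget (cthickening_subset_of_subset r inter_subset_left)]

end Volume

theorem le_measure_of_forall_le_measure_cthickening {X : Type*} [PseudoEMetricSpace X]
    [MeasurableSpace X] [OpensMeasurableSpace X] {μ : Measure X} [IsFiniteMeasure μ] {s : Set X}
    (hs : IsClosed s) {a : ℝ≥0∞} (h : ∀ δ > 0, a ≤ μ (cthickening δ s)) : a ≤ μ s := by
  have hlim : Tendsto (fun δ => μ (cthickening δ s)) (𝓝[>] 0) (𝓝 (μ s)) :=
    (tendsto_measure_cthickening_of_isClosed ⟨1, one_pos, by finiteness⟩ hs).mono_left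
      nhdsWithin_le_nhds
  exact ge_of_tendsto hlim <| eventually_mem_nhdsWithin.mono h

section WeakConvergence

variable {ι X : Type*} [PseudoEMetricSpace X] [MeasurableSpace X] {l : Filter ι}
  {μs νs : ι → FiniteMeasure X} {μ ν : FiniteMeasure X}

section OpensMeasurableSpace

variable [OpensMeasurableSpace X] [l.NeBot]

theorem measure_le_liminf_measure_thickening (h : Tendsto μs l (𝓝 μ)) {s : Set X}
    (hs : MeasurableSet s) {δ : ℝ} (hδ : 0 < δ) :
    (μ : Measure X) s ≤ liminf (fun i => (μs i : Measure X) (thickening δ s)) l := by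
  have hle (i : ι) :
      ∫⁻ x, thickenedIndicator hδ s x ∂μs i ≤ (μs i : Measure X) (thickening δ s) := by
    rw [← lintegral_indicator_one isOpen_thickening.measurableSet]
    refine lintegral_mono fun x => ?_
    by_cases hx : x ∈ thickening δ s
    · simpa only [indicator_of_mem hx, Pi.one_apply, ENNReal.coe_le_one_iff] using
        thickenedIndicator_le_one hδ s x
    · simp [hx, thickenedIndicator_zero hδ s hx, -thickenedIndicator_apply]
  calc (μ : Measure X) s
    _ ≤ ∫⁻ x, thickenedIndicator hδ s x ∂μ := measure_le_lintegral_thickenedIndicator _ hs hδ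
    _ = liminf (fun i => ∫⁻ x, thickenedIndicator hδ s x ∂μs i) l :=
        (FiniteMeasure.tendsto_iff_forall_lintegral_tendsto.1 h _).liminf_eq.symm
    _ ≤ _ := liminf_le_liminf (Eventually.of_forall hle)

theorem ae_mem_of_tendsto (h : Tendsto μs l (𝓝 μ)) {s : Set X} (hs : IsClosed s)
    (hμs : ∀ δ > 0, ∀ᶠ i in l, ∀ᵐ x ∂(μs i : Measure X), x ∈ cthickening δ s) :
    ∀ᵐ x ∂(μ : Measure X), x ∈ s := by
  have hthick (δ : ℝ) (hδ : 0 < δ) : (μ : Measure X) univ ≤ (μ : Measure X) (cthickening δ s) :=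
    calc (μ : Measure X) univ
      _ ≤ liminf (fun i => (μs i : Measure X) (thickening 1 univ)) l :=
          measure_le_liminf_measure_thickening h .univ one_pos
      _ ≤ liminf (fun i => (μs i : Measure X) (cthickening δ s)) l :=
          liminf_le_liminf <| (hμs δ hδ).mono fun i hi =>
            (measure_mono (subset_univ _)).trans (measure_mono_ae (hi.mono fun x hx _ => hx))
      _ ≤ limsup (fun i => (μs i : Measure X) (cthickening δ s)) l := liminf_le_limsup
      _ ≤ (μ : Measure X) (cthickening δ s) :=
          FiniteMeasure.limsup_measure_closed_le_of_tendsto h isClosed_cthickening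
  exact (ae_iff_measure_eq hs.nullMeasurableSet).2 <|
    (measure_mono (subset_univ s)).antisymm (le_measure_of_forall_le_measure_cthickening hs hthick)

theorem measure_isClosed_le_mul_of_tendsto (hμ : Tendsto μs l (𝓝 μ)) (hν : Tendsto νs l (𝓝 ν))
    {C : ℝ≥0}
    (h : ∀ δ > 0, ∀ᶠ i in l, ∀ s, (νs i : Measure X) s ≤ C * (μs i : Measure X) (cthickening δ s))
    {s : Set X} (hs : IsClosed s) : (ν : Measure X) s ≤ C * (μ : Measure X) s := by
  have hthick (δ : ℝ) (hδ : 0 < δ) :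
      (ν : Measure X) s ≤ C * (μ : Measure X) (cthickening (δ + δ) s) :=
    calc (ν : Measure X) s
      _ ≤ liminf (fun i => (νs i : Measure X) (thickening δ s)) l :=
          measure_le_liminf_measure_thickening hν hs.measurableSet hδ
      _ ≤ liminf (fun i => C * (μs i : Measure X) (cthickening (δ + δ) s)) l :=
          liminf_le_liminf <| (h δ hδ).mono fun i hi =>
            (hi _).trans (by grw [cthickening_thickening_subset hδ.le])
      _ ≤ limsup (fun i => C * (μs i : Measure X) (cthickening (δ + δ) s)) l := liminf_le_limsup
      _ = C * limsup (fun i => (μs i : Measure X) (cthickening (δ + δ) s)) l :=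
        ENNReal.limsup_const_mul_of_ne_top ENNReal.coe_ne_top
      _ ≤ C * (μ : Measure X) (cthickening (δ + δ) s) := by
          grw [FiniteMeasure.limsup_measure_closed_le_of_tendsto hμ isClosed_cthickening]
  refine le_measure_of_forall_le_measure_cthickening (μ := C • (μ : Measure X)) hs fun δ hδ => ?_
  simpa using hthick (δ / 2) (half_pos hδ)

end OpensMeasurableSpace

theorem le_smul_of_tendsto [BorelSpace X] [l.NeBot]
    (hμ : Tendsto μs l (𝓝 μ)) (hν : Tendsto νs l (𝓝 ν)) {C : ℝ≥0}
    (h : ∀ δ > 0, ∀ᶠ i in l, ∀ s, (νs i : Measure X) s ≤ C * (μs i : Measure X) (cthickening δ s)) :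
    (ν : Measure X) ≤ C • (μ : Measure X) := by
  refine Measure.le_iff.2 fun s hs => ?_
  rw [hs.measure_eq_iSup_isClosed_of_ne_top (by finiteness)]
  refine iSup₂_le fun F hFs => iSup_le fun hF => ?_
  exact (measure_isClosed_le_mul_of_tendsto hμ hν h hF).trans ((C • (μ : Measure X)).mono hFs)

end WeakConvergence

section OccupationMeasure

variable {A : Set ℂ} {d : ℝ} {m : Measure ℂ} {g : ℂ → ℂ} {K : ℝ≥0}

theorem isFiniteMeasure_occApprox (hA : Bornology.IsBounded A) (d r : ℝ) :
    IsFiniteMeasure (occApprox A d r) := by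
  have := hA.cthickening (δ := r) |>.measure_lt_top (μ := volume)
  exact ⟨by simpa [occApprox] using ENNReal.mul_lt_top ENNReal.ofReal_lt_top this⟩

theorem ae_mem_cthickening_occApprox (A : Set ℂ) (d r : ℝ) :
    ∀ᵐ z ∂occApprox A d r, z ∈ cthickening r A :=
  Measure.ae_smul_measure (ae_restrict_mem isClosed_cthickening.measurableSet) _

theorem occApprox_image_le (hg : LipschitzWith K g) (hA : IsCompact A) (d : ℝ) {r : ℝ} (hr : 0 < r)
    (s : Set ℂ) :
    occApprox (g '' A) d r s ≤
      (2 * K + 1) ^ 2 * occApprox A d r (g ⁻¹' cthickening ((K + 1) * r) s) := by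
  lift r to ℝ≥0 using hr.le
  have := measure_inter_cthickening_image_le volume hg hA (by exact_mod_cast hr) s
  rw [Complex.finrank_real_complex] at this
  simp only [occApprox, Measure.smul_apply, smul_eq_mul,
    Measure.restrict_apply' isClosed_cthickening.measurableSet]
  grw [this, mul_left_comm]

theorem IsOccupationMeasure.isFiniteMeasure (hm : IsOccupationMeasure A d m) : IsFiniteMeasure m :=
  ⟨hm.2.1.lt_top⟩

theorem IsOccupationMeasure.tendsto (hm : IsOccupationMeasure A d m)
    (hA : Bornology.IsBounded A) :
    Tendsto (β := FiniteMeasure ℂ) (fun r => ⟨occApprox A d r, isFiniteMeasure_occApprox hA d r⟩)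
      (𝓝[>] 0) (𝓝 ⟨m, hm.isFiniteMeasure⟩) :=
  FiniteMeasure.tendsto_of_forall_integral_tendsto hm.2.2

theorem IsOccupationMeasure.ae_mem (hm : IsOccupationMeasure A d m) (hA : IsCompact A) :
    ∀ᵐ x ∂m, x ∈ A := by
  refine ae_mem_of_tendsto (hm.tendsto hA.isBounded) hA.isClosed fun δ hδ => ?_
  filter_upwards [Ioc_mem_nhdsGT hδ] with r hr
  exact (ae_mem_cthickening_occApprox A d r).mono fun z hz => cthickening_mono hr.2 A hz

theorem IsOccupationMeasure.le_smul_map {m' : Measure ℂ} (hm : IsOccupationMeasure A d m)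
    (hm' : IsOccupationMeasure (g '' A) d m') (hA : IsCompact A) (hg : LipschitzWith K g) :
    m' ≤ ((2 * K + 1) ^ 2 : ℝ≥0) • m.map g := by
  refine le_smul_of_tendsto (FiniteMeasure.tendsto_map_of_tendsto_of_continuous _ _
    (hm.tendsto hA.isBounded) hg.continuous) (hm'.tendsto (hA.image hg.continuous).isBounded)
    fun δ hδ => ?_
  filter_upwards [Ioc_mem_nhdsGT (show 0 < δ / (K + 1) by positivity)] with r hr s
  have hrδ : (K + 1) * r ≤ δ := (le_div_iff₀' (by positivity)).1 hr.2
  calc occApprox (g '' A) d r s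
    _ ≤ (2 * K + 1) ^ 2 * occApprox A d r (g ⁻¹' cthickening ((K + 1) * r) s) :=
        occApprox_image_le hg hA d hr.1 s
    _ ≤ (2 * K + 1) ^ 2 * occApprox A d r (g ⁻¹' cthickening δ s) := by
        grw [cthickening_mono hrδ s]
    _ = ((2 * K + 1) ^ 2 : ℝ≥0) * (occApprox A d r).map g (cthickening δ s) := by
        rw [Measure.map_apply hg.continuous.measurable isClosed_cthickening.measurableSet]
        norm_cast

end OccupationMeasure

section RieszEnergy

theorem rpow_neg_le_mul_rpow_neg_of_le_mul {a b : ℝ≥0∞} {c : ℝ≥0} (hc : c ≠ 0) (h : a ≤ c * b)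
    {s : ℝ} (hs : 0 ≤ s) : b ^ (-s) ≤ c ^ s * a ^ (-s) :=
  calc b ^ (-s)
    _ ≤ (a / c) ^ (-s) := by
        rw [ENNReal.rpow_neg, ENNReal.rpow_neg]
        grw [ENNReal.div_le_of_le_mul' h]
    _ = c ^ s * a ^ (-s) := by
        have hcs : (c : ℝ≥0∞) ^ s ≠ ⊤ := ENNReal.rpow_ne_top_of_nonneg hs ENNReal.coe_ne_top
        rw [ENNReal.rpow_neg, ENNReal.div_rpow_of_nonneg _ _ hs, ENNReal.inv_div (.inl hcs)
          (.inl (by simp [hc])), ENNReal.rpow_neg, div_eq_mul_inv]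

variable {X Y : Type*} [MeasurableSpace X] [PseudoEMetricSpace X] [MeasurableSpace Y]
  [PseudoEMetricSpace Y]

/-- The Riesz `s`-energy `∬ |x - y|^(-s) dμ(x) dμ(y)` of a measure. Note that atoms contribute `∞`
for `s > 0`, since `0 ^ (-s) = ∞` in `ℝ≥0∞`. -/
noncomputable def rieszEnergy (s : ℝ) (μ : Measure X) : ℝ≥0∞ :=
  ∫⁻ x, ∫⁻ y, edist x y ^ (-s) ∂μ ∂μ

theorem rieszEnergy_mono (s : ℝ) {μ ν : Measure X} (h : μ ≤ ν) :
    rieszEnergy s μ ≤ rieszEnergy s ν :=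
  lintegral_mono' h fun _ => lintegral_mono' h le_rfl

theorem rieszEnergy_smul (s : ℝ) (c : ℝ≥0) (μ : Measure X) :
    rieszEnergy s (c • μ) = c ^ 2 * rieszEnergy s μ := by
  simp only [rieszEnergy, lintegral_smul_measure, ENNReal.smul_def, smul_eq_mul]
  rw [lintegral_const_mul' _ _ ENNReal.coe_ne_top, ← mul_assoc, sq]

theorem rieszEnergy_map_le {g : X → Y} {μ : Measure X} {L : ℝ≥0} (hL : L ≠ 0)
    (hg : ∀ᵐ x ∂μ, ∀ᵐ y ∂μ, edist x y ≤ L * edist (g x) (g y)) {s : ℝ} (hs : 0 ≤ s) :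
    rieszEnergy s (μ.map g) ≤ L ^ s * rieszEnergy s μ := by
  have hLs : (L : ℝ≥0∞) ^ s ≠ ⊤ := ENNReal.rpow_ne_top_of_nonneg hs ENNReal.coe_ne_top
  calc ∫⁻ x, ∫⁻ y, edist x y ^ (-s) ∂(μ.map g) ∂(μ.map g)
    _ ≤ ∫⁻ x, ∫⁻ y, edist (g x) (g y) ^ (-s) ∂μ ∂μ :=
        (lintegral_map_le _ g).trans (lintegral_mono fun x => lintegral_map_le _ g)
    _ ≤ ∫⁻ x, ∫⁻ y, L ^ s * edist x y ^ (-s) ∂μ ∂μ := by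
        refine lintegral_mono_ae (hg.mono fun x hx => lintegral_mono_ae (hx.mono fun y hxy => ?_))
        exact rpow_neg_le_mul_rpow_neg_of_le_mul hL hxy hs
    _ = L ^ s * rieszEnergy s μ := by simp only [lintegral_const_mul' _ _ hLs, rieszEnergy]

theorem EnergyCondition.of_le_smul_map {m m' : Measure ℂ} {d : ℝ} (hm : EnergyCondition m d)
    {A : Set ℂ} (hA : Bornology.IsBounded A) (hmA : ∀ᵐ x ∂m, x ∈ A) {g : ℂ → ℂ} {L C : ℝ≥0}
    (hg : AntilipschitzWith L (A.domRestrict g)) (hle : m' ≤ C • m.map g) :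
    EnergyCondition m' d := by
  intro U' _ ε hε
  have hs : 0 ≤ d - ε := sub_nonneg.2 hε.2.le
  have hexpand : ∀ᵐ x ∂m, ∀ᵐ y ∂m, edist x y ≤ (L + 1 : ℝ≥0) * edist (g x) (g y) := by
    filter_upwards [hmA] with x hx
    filter_upwards [hmA] with y hy
    calc edist x y
      _ ≤ L * edist (g x) (g y) := hg ⟨x, hx⟩ ⟨y, hy⟩
      _ ≤ (L + 1 : ℝ≥0) * edist (g x) (g y) := by gcongr; exact le_self_add
  have hfinite : rieszEnergy (d - ε) m < ⊤ := by
    rw [← Measure.restrict_eq_self_of_ae_mem hmA]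
    exact hm A hA ε hε
  calc rieszEnergy (d - ε) (m'.restrict U')
    _ ≤ rieszEnergy (d - ε) (C • m.map g) := rieszEnergy_mono _ (Measure.restrict_le_self.trans hle)
    _ = C ^ 2 * rieszEnergy (d - ε) (m.map g) := rieszEnergy_smul _ _ _
    _ ≤ C ^ 2 * ((L + 1 : ℝ≥0) ^ (d - ε) * rieszEnergy (d - ε) m) := by
        grw [rieszEnergy_map_le (by positivity) hexpand hs]
    _ < ⊤ := by finiteness

end RieszEnergy

section Holomorphic

theorem eventually_nhdsNE_ne_of_injOn {X Y : Type*} [TopologicalSpace X] {f : X → Y} {s : Set X}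
    {a : X} (hf : InjOn f s) (hs : s ∈ 𝓝 a) : ∀ᶠ x in 𝓝[≠] a, f x ≠ f a := by
  filter_upwards [self_mem_nhdsWithin, mem_nhdsWithin_of_mem_nhds hs] with x hxa hxs
  exact hf.ne hxs (mem_of_mem_nhds hs) hxa

theorem frequently_nhds_ne_of_injOn {X Y : Type*} [TopologicalSpace X] {f : X → Y} {s : Set X}
    {a : X} [(𝓝[≠] a).NeBot] (hf : InjOn f s) (hs : s ∈ 𝓝 a) : ∃ᶠ x in 𝓝 a, f x ≠ f a :=
  (eventually_nhdsNE_ne_of_injOn hf hs).frequently.filter_mono nhdsWithin_le_nhds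

variable {E : Type*} [NormedAddCommGroup E] [NormedSpace ℂ E] [CompleteSpace E] {U K : Set ℂ}

theorem eventually_deriv_ne_zero {f : ℂ → E} {a : ℂ} (hf : AnalyticAt ℂ f a)
    (hne : ∃ᶠ z in 𝓝 a, f z ≠ f a) : ∀ᶠ z in 𝓝[≠] a, deriv f z ≠ 0 := by
  refine hf.deriv.eventually_eq_zero_or_eventually_ne_zero.resolve_left fun hzero => ?_
  obtain ⟨ε, hε, hball⟩ := eventually_nhds_iff_ball.1 (hzero.and hf.eventually_analyticAt)
  refine hne ?_
  filter_upwards [ball_mem_nhds a hε] with z hz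
  exact not_not.2 <| isOpen_ball.is_const_of_deriv_eq_zero (convex_ball a ε).isPreconnected
    (fun w hw => (hball w hw).2.differentiableAt.differentiableWithinAt)
    (fun w hw => (hball w hw).1) hz (mem_ball_self hε)

theorem isOpenMap_domRestrict_of_injOn {f : ℂ → ℂ} (hU : IsOpen U) (hf : DifferentiableOn ℂ f U)
    (hinj : InjOn f U) : IsOpenMap (U.domRestrict f) := by
  refine isOpenMap_iff_nhds_le.2 fun x => ?_
  have hx := hU.mem_nhds x.2
  rw [domRestrict_eq, ← map_map, map_nhds_subtype_coe_eq_nhds x.2 hx]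
  exact (hf.analyticAt hx).eventually_constant_or_nhds_le_map_nhds.resolve_left
    fun hconst => frequently_nhds_ne_of_injOn hinj hx (hconst.mono fun _ => not_not.2)

theorem differentiableOn_openPartialHomeomorph_symm {e : OpenPartialHomeomorph ℂ ℂ}
    (he : DifferentiableOn ℂ e e.source) : DifferentiableOn ℂ e.symm e.target := by
  intro w hw
  have hsource := e.open_source.mem_nhds (e.map_target hw)
  have htarget := e.open_target.mem_nhds hw
  have hpunctured : Tendsto e.symm (𝓝[≠] w) (𝓝[≠] (e.symm w)) :=
    tendsto_nhdsWithin_iff.2 ⟨(e.symm.continuousAt hw).mono_left nhdsWithin_le_nhds,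
      eventually_nhdsNE_ne_of_injOn e.symm.injOn htarget⟩
  have hne : ∀ᶠ v in 𝓝[≠] w, deriv e (e.symm v) ≠ 0 :=
    hpunctured.eventually <| eventually_deriv_ne_zero (he.analyticAt hsource) <|
      frequently_nhds_ne_of_injOn e.injOn hsource
  have hdiff : ∀ᶠ v in 𝓝[≠] w, DifferentiableAt ℂ e.symm v := by
    filter_upwards [hne, nhdsWithin_le_nhds htarget] with v hv hvt
    exact (e.hasDerivAt_symm hvt hv
      (he.differentiableAt (e.open_source.mem_nhds (e.map_target hvt))).hasDerivAt).differentiableAt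
  exact (Complex.analyticAt_of_differentiable_on_punctured_nhds_of_continuousAt hdiff
    (e.symm.continuousAt hw)).differentiableAt.differentiableWithinAt

theorem exists_lipschitzOnWith_of_differentiableOn {f : ℂ → E} (hK : IsCompact K) (hU : IsOpen U)
    (hKU : K ⊆ U) (hf : DifferentiableOn ℂ f U) : ∃ C, LipschitzOnWith C f K := by
  have hloc : LocallyLipschitzOn U f := fun z hz => by
    obtain ⟨C, t, ht, hC⟩ := (hf.analyticAt (hU.mem_nhds hz)).contDiffAt.exists_lipschitzOnWith
    exact ⟨C, t, mem_nhdsWithin_of_mem_nhds ht, hC⟩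
  exact (hloc.mono hKU).exists_lipschitzOnWith_of_compact hK

theorem exists_antilipschitzWith_domRestrict_of_injOn {f : ℂ → ℂ} (hK : IsCompact K)
    (hU : IsOpen U) (hKU : K ⊆ U) (hf : DifferentiableOn ℂ f U) (hinj : InjOn f U) :
    ∃ L, AntilipschitzWith L (K.domRestrict f) := by
  let e : OpenPartialHomeomorph ℂ ℂ := .ofContinuousOpenRestrict (hinj.toPartialEquiv f U)
    hf.continuousOn (isOpenMap_domRestrict_of_injOn hU hf hinj) hU
  obtain ⟨L, hL⟩ := exists_lipschitzOnWith_of_differentiableOn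
    (hK.image_of_continuousOn (hf.continuousOn.mono hKU)) e.open_target (image_mono hKU)
    (differentiableOn_openPartialHomeomorph_symm (e := e) hf)
  refine ⟨L, fun x y => ?_⟩
  have := hL (mem_image_of_mem f x.2) (mem_image_of_mem f y.2)
  rwa [show e.symm (f x) = x from e.left_inv (hKU x.2),
    show e.symm (f y) = y from e.left_inv (hKU y.2)] at this

end Holomorphic

theorem energyCondition_conformal_invariance_general {A : Set ℂ} (hA : IsCompact A) {d : ℝ}
    {m m' : Measure ℂ} (hm : IsOccupationMeasure A d m) {φ : ℂ → ℂ} {K L : ℝ≥0}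
    (hφ : LipschitzOnWith K φ A) (hφ' : AntilipschitzWith L (A.domRestrict φ))
    (hm' : IsOccupationMeasure (φ '' A) d m') (henergy : EnergyCondition m d) :
    EnergyCondition m' d := by
  obtain ⟨g, hg, hφg⟩ := hφ.extend_finite_dimension
  have hg' : AntilipschitzWith L (A.domRestrict g) := by
    rwa [← domRestrict_eq_domRestrict_iff.2 hφg]
  rw [hφg.image_eq] at hm'
  exact henergy.of_le_smul_map hA.isBounded (hm.ae_mem hA) hg' (hm.le_smul_map hm' hA hg)

/-- If the `d`-occupation measure of a compact `A ⊆ ℂ` satisfies the energy condition and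
`φ` is conformal (injective holomorphic) on an open neighborhood of `A`, then the
`d`-occupation measure of `φ(A)` also satisfies the energy condition. -/
theorem energyCondition_conformal_invariance
    (d : ℝ) (hd : d ∈ Set.Ioo (0 : ℝ) 2)
    (A : Set ℂ) (hA : IsCompact A)
    (mA : Measure ℂ) (hmA : IsOccupationMeasure A d mA)
    (U : Set ℂ) (hU : IsOpen U) (hAU : A ⊆ U)
    (φ : ℂ → ℂ) (hinj : Set.InjOn φ U) (hhol : DifferentiableOn ℂ φ U)
    (mφA : Measure ℂ) (hmφA : IsOccupationMeasure (φ '' A) d mφA)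
    (henergy : EnergyCondition mA d) :
    EnergyCondition mφA d := by
  obtain ⟨K, hK⟩ := exists_lipschitzOnWith_of_differentiableOn hA hU hAU hhol
  obtain ⟨L, hL⟩ := exists_antilipschitzWith_domRestrict_of_injOn hA hU hAU hhol hinj
  exact energyCondition_conformal_invariance_general hA hmA hK hL hmφA henergy
end
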